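/- Let f¹, f² : ℝ⁵ → ℝ be smooth functions of (t, x, y, ζ₁, ζ₂), let δ : ℝ³ → ℝ be a smooth function satisfying δ_xx + δ_yy = 0, and let ψ : ℝ³ → ℝ be a smooth solution of ζ_t + ψ_x ζ_y − ψ_y ζ_x = ∂_x[f¹(t,x,y,ζ_x,ζ_y)] + ∂_y[f²(t,x,y,ζ_x,ζ_y)], where ζ := ψ_xx + ψ_yy and ∂_x, ∂_y differentiate the full composition. Then ψ̃(t,x,y) := ψ(t,x,y) + δ(t,x,y) is a smooth solution of the equation from the same class with arbitrary elements f̃¹(t,x,y,ζ₁,ζ₂) := f¹(t,x,y,ζ₁,ζ₂) + δ(t,x,y)·ζ₂ and f̃²(t,x,y,ζ₁,ζ₂) := f²(t,x,y,ζ₁,ζ₂) − δ(t,x,y)·ζ₁. -/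

import Mathlib

/-!
Because `δ` is harmonic in `(x, y)`, adding it to `ψ` does not change the vorticity `ζ`, so the only
new terms on the left of the equation are `δ_x ζ_y - δ_y ζ_x`. By symmetry of second derivatives,
this Jacobian is the divergence of `(δ ζ_y, -δ ζ_x)`, which is exactly what the new arbitrary
elements add to the right-hand side.
-/

noncomputable section

abbrev V5 := ℝ × ℝ × ℝ × ℝ × ℝ

/-- Partial derivative with respect to t. -/
def dT (f : ℝ × ℝ × ℝ → ℝ) (p : ℝ × ℝ × ℝ) : ℝ := fderiv ℝ f p (1, 0, 0)
/-- Partial derivative with respect to x. -/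
def dX (f : ℝ × ℝ × ℝ → ℝ) (p : ℝ × ℝ × ℝ) : ℝ := fderiv ℝ f p (0, 1, 0)
/-- Partial derivative with respect to y. -/
def dY (f : ℝ × ℝ × ℝ → ℝ) (p : ℝ × ℝ × ℝ) : ℝ := fderiv ℝ f p (0, 0, 1)

/-- The vorticity ζ := ψ_xx + ψ_yy. -/
def vort (ψ : ℝ × ℝ × ℝ → ℝ) : ℝ × ℝ × ℝ → ℝ := fun p => dX (dX ψ) p + dY (dY ψ) p

/-- The full composition (t,x,y) ↦ f(t, x, y, ζ_x(t,x,y), ζ_y(t,x,y)). -/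
def fcomp (f : V5 → ℝ) (ψ : ℝ × ℝ × ℝ → ℝ) : ℝ × ℝ × ℝ → ℝ :=
  fun p => f (p.1, p.2.1, p.2.2, dX (vort ψ) p, dY (vort ψ) p)

/-- ψ is a smooth solution of the generalized vorticity equation
ζ_t + ψ_x ζ_y − ψ_y ζ_x = ∂_x[f¹(t,x,y,ζ_x,ζ_y)] + ∂_y[f²(t,x,y,ζ_x,ζ_y)]. -/
def IsGenVortSol (f1 f2 : V5 → ℝ) (ψ : ℝ × ℝ × ℝ → ℝ) : Prop :=
  ContDiff ℝ (⊤ : ℕ∞) ψ ∧ ∀ p : ℝ × ℝ × ℝ,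
    dT (vort ψ) p + dX ψ p * dY (vort ψ) p - dY ψ p * dX (vort ψ) p
      = dX (fcomp f1 ψ) p + dY (fcomp f2 ψ) p

section DirectionalDerivative

variable {𝕜 E F : Type*} [NontriviallyNormedField 𝕜] [NormedAddCommGroup E] [NormedSpace 𝕜 E]
  [NormedAddCommGroup F] [NormedSpace 𝕜 F] {g : E → F} {u : E → 𝕜} {x : E} {n : WithTop ℕ∞}

theorem fderiv_fderiv_apply_comm (hg : ContDiffAt 𝕜 n g x) (hn : minSmoothness 𝕜 2 ≤ n) (v w : E) :
    fderiv 𝕜 (fun q => fderiv 𝕜 g q w) x v = fderiv 𝕜 (fun q => fderiv 𝕜 g q v) x w := by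
  have hbracket := VectorField.fderiv_apply_lieBracket (V := fun _ => v) (W := fun _ => w) hg hn
    (differentiableAt_const w) (differentiableAt_const v)
  exact sub_eq_zero.mp (by simpa [VectorField.lieBracket] using hbracket.symm)

theorem differentiableAt_fderiv_apply (hg : ContDiffAt 𝕜 n g x) (hn : 2 ≤ n) (v : E) :
    DifferentiableAt 𝕜 (fun q => fderiv 𝕜 g q v) x :=
  ((hg.fderiv_right (m := 1) (by rwa [one_add_one_eq_two])).differentiableAt
    one_ne_zero).clm_apply (differentiableAt_const v)

theorem fderiv_smul_fderiv_sub_fderiv_smul_fderiv (hu : DifferentiableAt 𝕜 u x)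
    (hg : ContDiffAt 𝕜 n g x) (hn : minSmoothness 𝕜 2 ≤ n) (v w : E) :
    fderiv 𝕜 (fun q => u q • fderiv 𝕜 g q w) x v - fderiv 𝕜 (fun q => u q • fderiv 𝕜 g q v) x w =
      fderiv 𝕜 u x v • fderiv 𝕜 g x w - fderiv 𝕜 u x w • fderiv 𝕜 g x v := by
  have hdiff := differentiableAt_fderiv_apply hg (le_minSmoothness.trans hn)
  rw [fderiv_fun_smul hu (hdiff w), fderiv_fun_smul hu (hdiff v)]
  simp [fderiv_fderiv_apply_comm hg hn v w]

end DirectionalDerivative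

section PartialDerivatives

variable {f g u : ℝ × ℝ × ℝ → ℝ} {p : ℝ × ℝ × ℝ} {m n : WithTop ℕ∞}

theorem contDiff_dX (hf : ContDiff ℝ n f) (hmn : m + 1 ≤ n) : ContDiff ℝ m (dX f) :=
  (hf.fderiv_right hmn).clm_apply contDiff_const

theorem contDiff_dY (hf : ContDiff ℝ n f) (hmn : m + 1 ≤ n) : ContDiff ℝ m (dY f) :=
  (hf.fderiv_right hmn).clm_apply contDiff_const

theorem differentiable_dX (hf : ContDiff ℝ 2 f) : Differentiable ℝ (dX f) :=
  fun _ => differentiableAt_fderiv_apply hf.contDiffAt le_rfl (0, 1, 0)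

theorem differentiable_dY (hf : ContDiff ℝ 2 f) : Differentiable ℝ (dY f) :=
  fun _ => differentiableAt_fderiv_apply hf.contDiffAt le_rfl (0, 0, 1)

theorem dX_add (hf : DifferentiableAt ℝ f p) (hg : DifferentiableAt ℝ g p) :
    dX (fun q => f q + g q) p = dX f p + dX g p := by
  simp only [dX, fderiv_fun_add hf hg, add_apply]

theorem dY_add (hf : DifferentiableAt ℝ f p) (hg : DifferentiableAt ℝ g p) :
    dY (fun q => f q + g q) p = dY f p + dY g p := by
  simp only [dY, fderiv_fun_add hf hg, add_apply]

theorem dY_sub (hf : DifferentiableAt ℝ f p) (hg : DifferentiableAt ℝ g p) :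
    dY (fun q => f q - g q) p = dY f p - dY g p := by
  simp only [dY, fderiv_fun_sub hf hg, sub_apply]

theorem dX_mul_dY_sub_dY_mul_dX (hu : DifferentiableAt ℝ u p) (hg : ContDiffAt ℝ 2 g p) :
    dX (fun q => u q * dY g q) p - dY (fun q => u q * dX g q) p =
      dX u p * dY g p - dY u p * dX g p :=
  fderiv_smul_fderiv_sub_fderiv_smul_fderiv hu hg (by simp) (0, 1, 0) (0, 0, 1)

end PartialDerivatives

section Vorticity

variable {ψ δ : ℝ × ℝ × ℝ → ℝ} {m n : WithTop ℕ∞}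

theorem contDiff_vort (hψ : ContDiff ℝ n ψ) (hmn : m + 2 ≤ n) : ContDiff ℝ m (vort ψ) := by
  have hmn' : m + 1 + 1 ≤ n := by rwa [add_assoc, one_add_one_eq_two]
  exact (contDiff_dX (contDiff_dX hψ hmn') le_rfl).add (contDiff_dY (contDiff_dY hψ hmn') le_rfl)

theorem vort_add (hψ : ContDiff ℝ 2 ψ) (hδ : ContDiff ℝ 2 δ) :
    vort (fun p => ψ p + δ p) = fun p => vort ψ p + vort δ p := by
  have hψd := hψ.differentiable two_ne_zero
  have hδd := hδ.differentiable two_ne_zero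
  have hx : dX (fun p => ψ p + δ p) = fun p => dX ψ p + dX δ p :=
    funext fun p => dX_add (hψd p) (hδd p)
  have hy : dY (fun p => ψ p + δ p) = fun p => dY ψ p + dY δ p :=
    funext fun p => dY_add (hψd p) (hδd p)
  funext p
  simp only [vort, hx, hy, dX_add (differentiable_dX hψ p) (differentiable_dX hδ p),
    dY_add (differentiable_dY hψ p) (differentiable_dY hδ p)]
  ring

theorem vort_add_of_vort_eq_zero (hψ : ContDiff ℝ 2 ψ) (hδ : ContDiff ℝ 2 δ)
    (hharm : ∀ p, vort δ p = 0) : vort (fun p => ψ p + δ p) = vort ψ := by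
  simp only [vort_add hψ hδ, hharm, add_zero]

theorem fcomp_congr_vort {φ : ℝ × ℝ × ℝ → ℝ} (h : vort φ = vort ψ) (f : V5 → ℝ) :
    fcomp f φ = fcomp f ψ := by
  unfold fcomp
  rw [h]

theorem differentiable_fcomp {f : V5 → ℝ} (hf : Differentiable ℝ f) (hζ : ContDiff ℝ 2 (vort ψ)) :
    Differentiable ℝ (fcomp f ψ) := by
  have hζx := differentiable_dX hζ
  have hζy := differentiable_dY hζ
  unfold fcomp
  fun_prop

theorem dX_fcomp_add_mul_add_dY_fcomp_sub_mul {f1 f2 : V5 → ℝ} (hf1 : Differentiable ℝ f1)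
    (hf2 : Differentiable ℝ f2) (hδ : Differentiable ℝ δ) (hζ : ContDiff ℝ 2 (vort ψ))
    (p : ℝ × ℝ × ℝ) :
    dX (fcomp (fun q => f1 q + δ (q.1, q.2.1, q.2.2.1) * q.2.2.2.2) ψ) p +
        dY (fcomp (fun q => f2 q - δ (q.1, q.2.1, q.2.2.1) * q.2.2.2.1) ψ) p =
      dX (fcomp f1 ψ) p + dY (fcomp f2 ψ) p +
        (dX δ p * dY (vort ψ) p - dY δ p * dX (vort ψ) p) := by
  have hζx := differentiable_dX hζ
  have hζy := differentiable_dY hζ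
  have hx : dX (fcomp (fun q => f1 q + δ (q.1, q.2.1, q.2.2.1) * q.2.2.2.2) ψ) p =
      dX (fcomp f1 ψ) p + dX (fun q => δ q * dY (vort ψ) q) p :=
    dX_add (differentiable_fcomp hf1 hζ p) ((hδ.mul hζy) p)
  have hy : dY (fcomp (fun q => f2 q - δ (q.1, q.2.1, q.2.2.1) * q.2.2.2.1) ψ) p =
      dY (fcomp f2 ψ) p - dY (fun q => δ q * dX (vort ψ) q) p :=
    dY_sub (differentiable_fcomp hf2 hζ p) ((hδ.mul hζx) p)
  rw [hx, hy, ← dX_mul_dY_sub_dY_mul_dX (hδ p) hζ.contDiffAt]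
  ring

end Vorticity

theorem equivalence_transformation_H_delta_general {f1 f2 : V5 → ℝ} {δ ψ : ℝ × ℝ × ℝ → ℝ}
    (hf1 : Differentiable ℝ f1) (hf2 : Differentiable ℝ f2) (hδ : ContDiff ℝ (⊤ : ℕ∞) δ)
    (hharm : ∀ p, vort δ p = 0) (h : IsGenVortSol f1 f2 ψ) :
    IsGenVortSol
      (fun q => f1 q + δ (q.1, q.2.1, q.2.2.1) * q.2.2.2.2)
      (fun q => f2 q - δ (q.1, q.2.1, q.2.2.1) * q.2.2.2.1)
      (fun p => ψ p + δ p) := by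
  obtain ⟨hψ, heq⟩ := h
  refine ⟨hψ.add hδ, fun p => ?_⟩
  have hvort : vort (fun p => ψ p + δ p) = vort ψ :=
    vort_add_of_vort_eq_zero (contDiff_infty.mp hψ 2) (contDiff_infty.mp hδ 2) hharm
  have hζ : ContDiff ℝ 2 (vort ψ) := contDiff_vort (contDiff_infty.mp hψ 4) (by norm_num)
  have hψd : Differentiable ℝ ψ := hψ.differentiable (by simp)
  have hδd : Differentiable ℝ δ := hδ.differentiable (by simp)
  rw [fcomp_congr_vort hvort, fcomp_congr_vort hvort, hvort, dX_add (hψd p) (hδd p),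
    dY_add (hψd p) (hδd p), dX_fcomp_add_mul_add_dY_fcomp_sub_mul hf1 hf2 hδd hζ]
  linear_combination heq p

theorem equivalence_transformation_H_delta
    (f1 f2 : V5 → ℝ) (hf1 : ContDiff ℝ (⊤ : ℕ∞) f1) (hf2 : ContDiff ℝ (⊤ : ℕ∞) f2)
    (δ : ℝ × ℝ × ℝ → ℝ) (hδ : ContDiff ℝ (⊤ : ℕ∞) δ)
    (hharm : ∀ p : ℝ × ℝ × ℝ, dX (dX δ) p + dY (dY δ) p = 0)
    (ψ : ℝ × ℝ × ℝ → ℝ) (h : IsGenVortSol f1 f2 ψ) :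
    IsGenVortSol
      (fun q => f1 q + δ (q.1, q.2.1, q.2.2.1) * q.2.2.2.2)
      (fun q => f2 q - δ (q.1, q.2.1, q.2.2.1) * q.2.2.2.1)
      (fun p => ψ p + δ p) :=
  equivalence_transformation_H_delta_general (hf1.differentiable (by simp))
    (hf2.differentiable (by simp)) hδ hharm h
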